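/- Let μ be a nonzero finite measure on a measurable space X, let λ > 0, and let u : (0,∞) × X → ℝ be measurable such that for every x ∈ X the function t ↦ u(t,x) is nonincreasing and satisfies u(t,x) ≤ 0, and such that ∫_X exp(−λ·u(t,·)) dμ < ∞ for every t > 0. Suppose the set T := {τ ∈ ℝ : ∫_X exp(−λ·û_τ) dμ < ∞} is nonempty. Then T ⊆ (−∞, 0] and liminf_{t→∞} −(1/(λt))·log ∫_X exp(−λ·u(t,·)) dμ = sup T. -/

import Mathlib

/-!
Write `I t = ∫ exp (-λ u_t)`. Since `exp (-λ û_τ) = sup_{t > 0} exp (λτt) exp (-λ u_t)`, slopes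
compare with the decay rate of `I` in both directions. If the supremum is integrable, it dominates
each of its members, so `I t ≤ C exp (-λτt)` and the decay rate is at least `τ`. Conversely, as
`u` is nonincreasing in `t`, for `τ ≤ 0` the supremum over `t` is at most the sum over integers
`n ≥ 0` of `exp (λτn) exp (-λ u_{n+1})`, whose integral is dominated by a geometric series as soon
as `τ` lies below the decay rate. Only `τ ≤ 0` matter: for `τ > 0` monotonicity makes `û_τ`
identically `-∞`, and `I`, being nondecreasing and positive, has decay rate at most `0`.
-/

open MeasureTheory Filter Set

/-- `exp(-λ·a)` for `a ∈ [-∞,∞)`, valued in `[0,∞]`, with the convention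
`exp(-λ·(-∞)) = +∞`. -/
noncomputable def expNegE (lam : ℝ) (a : EReal) : ENNReal :=
  if a = ⊥ then ⊤ else ENNReal.ofReal (Real.exp (-lam * a.toReal))

/-- The Legendre transform `û_τ(x) = inf_{t>0} (u(t,x) − τ·t)`, valued in `[−∞,∞)`. -/
noncomputable def legendreT {X : Type*} (u : ℝ → X → ℝ) (τ : ℝ) (x : X) : EReal :=
  ⨅ (t : ℝ) (_ : 0 < t), ((u t x - τ * t : ℝ) : EReal)

/-- The integral `∫ exp (-λ w) dμ` of a potential `w`, which enters the `λ`-Ding functional through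
its logarithm. -/
noncomputable def expIntegral {X : Type*} [MeasurableSpace X] (μ : Measure X) (lam : ℝ)
    (w : X → ℝ) : ENNReal :=
  ∫⁻ x, ENNReal.ofReal (Real.exp (-lam * w x)) ∂μ

/-- The set of slopes `τ` for which `exp (-λ û_τ)` is integrable. -/
def integrableSlopes {X : Type*} [MeasurableSpace X] (μ : Measure X) (lam : ℝ)
    (u : ℝ → X → ℝ) : Set ℝ :=
  {τ | ∫⁻ x, expNegE lam (legendreT u τ x) ∂μ < ⊤}

/-- The lower exponential decay rate `liminf -(1/(λt)) log (J t)` of a positive function `J` as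
`t → ∞`, measured in units of `λ`, so that `exp (-λτt)` has rate `τ`. It is valued in `[-∞,∞]`. -/
noncomputable def lowerDecayRate (lam : ℝ) (J : ℝ → ℝ) : EReal :=
  liminf (fun t : ℝ => ((-(1 / (lam * t)) * Real.log (J t) : ℝ) : EReal)) atTop

section LowerDecayRate

variable {lam C b τ : ℝ} {J : ℝ → ℝ}

theorem tendsto_neg_log_mul_exp_div (hlam : 0 < lam) (hC : 0 < C) (τ : ℝ) :
    Tendsto (fun t : ℝ => -(1 / (lam * t)) * Real.log (C * Real.exp (-lam * τ * t)))
      atTop (nhds τ) := by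
  have hlim : Tendsto (fun t : ℝ => τ - Real.log C / (lam * t)) atTop (nhds (τ - 0)) :=
    ((tendsto_id.const_mul_atTop hlam).const_div_atTop _).const_sub τ
  rw [sub_zero] at hlim
  refine hlim.congr' ?_
  filter_upwards [eventually_gt_atTop 0] with t ht
  rw [Real.log_mul hC.ne' (Real.exp_ne_zero _), Real.log_exp]
  field_simp
  ring

theorem lowerDecayRate_mul_exp (hlam : 0 < lam) (hC : 0 < C) (τ : ℝ) :
    lowerDecayRate lam (fun t => C * Real.exp (-lam * τ * t)) = τ :=
  (EReal.tendsto_coe.2 (tendsto_neg_log_mul_exp_div hlam hC τ)).liminf_eq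

theorem lowerDecayRate_anti {K : ℝ → ℝ} (hlam : 0 < lam) (hJ : ∀ᶠ t in atTop, 0 < J t)
    (hJK : ∀ᶠ t in atTop, J t ≤ K t) : lowerDecayRate lam K ≤ lowerDecayRate lam J := by
  refine liminf_le_liminf ?_
  filter_upwards [hJ, hJK, eventually_gt_atTop 0] with t hpos hle ht
  refine EReal.coe_le_coe_iff.2 (mul_le_mul_of_nonpos_left (Real.log_le_log hpos hle) ?_)
  exact neg_nonpos.2 (by positivity)

theorem eventually_le_exp_of_lt_lowerDecayRate (hlam : 0 < lam)
    (hb : (b : EReal) < lowerDecayRate lam J) :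
    ∀ᶠ t in atTop, J t ≤ Real.exp (-lam * b * t) := by
  filter_upwards [eventually_lt_of_lt_liminf hb, eventually_gt_atTop 0] with t hbt ht
  have hlog : b * (lam * t) < -Real.log (J t) := by
    rw [← lt_div_iff₀ (by positivity)]
    calc b < -(1 / (lam * t)) * Real.log (J t) := EReal.coe_lt_coe_iff.1 hbt
      _ = -Real.log (J t) / (lam * t) := by ring
  exact (Real.le_exp_log _).trans (Real.exp_le_exp.2 (by linarith))

theorem summable_mul_exp_of_eventually_le_exp (hlam : 0 < lam) (hτb : τ < b)
    (hJ0 : ∀ᶠ t in atTop, 0 ≤ J t) (hJ : ∀ᶠ t in atTop, J t ≤ Real.exp (-lam * b * t)) :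
    Summable fun n : ℕ => J (n + 1) * Real.exp (lam * τ * n) := by
  have hgeom : Summable fun n : ℕ => Real.exp (-lam * b) * Real.exp (n * (lam * (τ - b))) :=
    (Real.summable_exp_nat_mul_iff.2 (mul_neg_of_pos_of_neg hlam (sub_neg.2 hτb))).mul_left _
  have hsucc : Tendsto (fun n : ℕ => (n : ℝ) + 1) atTop atTop :=
    tendsto_atTop_add_const_right _ _ tendsto_natCast_atTop_atTop
  refine .of_norm_bounded_eventually_nat hgeom ?_
  filter_upwards [hsucc.eventually hJ0, hsucc.eventually hJ] with n hn0 hn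
  rw [Real.norm_of_nonneg (by positivity)]
  calc J (n + 1) * Real.exp (lam * τ * n)
      ≤ Real.exp (-lam * b * (n + 1)) * Real.exp (lam * τ * n) := by gcongr
    _ = Real.exp (-lam * b) * Real.exp (n * (lam * (τ - b))) := by
      rw [← Real.exp_add, ← Real.exp_add]
      ring_nf

end LowerDecayRate

section LegendreTransform

variable {X : Type*} {lam τ : ℝ} {u : ℝ → X → ℝ} {x : X}

theorem expNegE_coe (lam r : ℝ) : expNegE lam r = ENNReal.ofReal (Real.exp (-lam * r)) := by
  simp [expNegE]

theorem expNegE_eq_exp_neg_rpow {a : EReal} (hlam : 0 < lam) (ha : a ≠ ⊤) :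
    expNegE lam a = EReal.exp (-a) ^ lam := by
  induction a with
  | bot => simp [expNegE, hlam]
  | coe r =>
    rw [expNegE_coe, ← EReal.coe_neg, EReal.exp_coe,
      ENNReal.ofReal_rpow_of_pos (Real.exp_pos _), ← Real.exp_mul, neg_mul_comm, mul_comm]
  | top => exact absurd rfl ha

theorem expNegE_iInf_coe {ι : Type*} [Nonempty ι] (hlam : 0 < lam) (f : ι → ℝ) :
    expNegE lam (⨅ i, (f i : EReal)) = ⨆ i, ENNReal.ofReal (Real.exp (-lam * f i)) := by
  have hne_top : ⨅ i, (f i : EReal) ≠ ⊤ := by simp [iInf_eq_top]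
  calc expNegE lam (⨅ i, (f i : EReal))
      = EReal.exp (-⨅ i, (f i : EReal)) ^ lam := expNegE_eq_exp_neg_rpow hlam hne_top
    _ = EReal.exp (⨆ i, -(f i : EReal)) ^ lam := 
      congrArg (EReal.exp · ^ lam) (EReal.negOrderIso.map_iInf _)
    _ = ⨆ i, EReal.exp (-(f i : EReal)) ^ lam :=
      (congrArg (· ^ lam) (EReal.expOrderIso.map_iSup _)).trans
        ((ENNReal.orderIsoRpow lam hlam).map_iSup _)
    _ = ⨆ i, ENNReal.ofReal (Real.exp (-lam * f i)) := iSup_congr fun i => by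
      rw [← expNegE_eq_exp_neg_rpow hlam (EReal.coe_ne_top _), expNegE_coe]

theorem expNegE_legendreT (hlam : 0 < lam) (u : ℝ → X → ℝ) (τ : ℝ) (x : X) :
    expNegE lam (legendreT u τ x) =
      ⨆ (t : ℝ) (_ : 0 < t), ENNReal.ofReal (Real.exp (-lam * (u t x - τ * t))) := by
  have : Nonempty {t : ℝ // 0 < t} := ⟨⟨1, one_pos⟩⟩
  rw [legendreT, iInf_subtype', expNegE_iInf_coe hlam, iSup_subtype']

theorem legendreT_eq_bot_of_pos {c : ℝ} (hτ : 0 < τ) (hu : ∀ᶠ t in atTop, u t x ≤ c) :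
    legendreT u τ x = ⊥ := by
  refine (EReal.eq_bot_iff_forall_lt _).2 fun y => ?_
  obtain ⟨t, hut, hyt, ht⟩ := (hu.and (((tendsto_id.const_mul_atTop hτ).eventually_gt_atTop
    (c - y)).and (eventually_gt_atTop 0))).exists
  refine (iInf₂_le t ht).trans_lt (EReal.coe_lt_coe_iff.2 ?_)
  rw [id] at hyt
  linarith

theorem expNegE_legendreT_le_tsum (hlam : 0 < lam) (hτ : τ ≤ 0)
    (hmono : AntitoneOn (fun t => u t x) (Ioi 0)) :
    expNegE lam (legendreT u τ x) ≤
      ∑' n : ℕ, ENNReal.ofReal (Real.exp (-lam * u (n + 1) x)) *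
        ENNReal.ofReal (Real.exp (lam * τ * n)) := by
  rw [expNegE_legendreT hlam]
  refine iSup₂_le fun t ht => le_trans ?_ (ENNReal.le_tsum ⌊t⌋₊)
  rw [← ENNReal.ofReal_mul (Real.exp_nonneg _), ← Real.exp_add]
  gcongr
  have hceil : t ≤ ⌊t⌋₊ + 1 := (Nat.lt_floor_add_one t).le
  have hu : u (⌊t⌋₊ + 1) x ≤ u t x := hmono ht (ht.trans_le hceil) hceil
  have hτt : τ * t ≤ τ * ⌊t⌋₊ := mul_le_mul_of_nonpos_left (Nat.floor_le ht.le) hτ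
  linear_combination lam * hu + lam * hτt

end LegendreTransform

section IntegrableSlopes

variable {X : Type*} [MeasurableSpace X] {μ : Measure X} {lam τ : ℝ} {u : ℝ → X → ℝ}

theorem expIntegral_pos {w : X → ℝ} (hμ : μ ≠ 0) (hw : AEMeasurable w μ) (lam : ℝ) :
    0 < expIntegral μ lam w := by
  have : (ae μ).NeBot := ae_neBot.2 hμ
  refine pos_iff_ne_zero.2 fun h => ?_
  obtain ⟨x, hx⟩ := ((lintegral_eq_zero_iff' (by fun_prop)).1 h).exists
  exact (ENNReal.ofReal_pos.2 (Real.exp_pos _)).ne' hx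

theorem expIntegral_anti {w w' : X → ℝ} (hlam : 0 ≤ lam) (h : w' ≤ w) :
    expIntegral μ lam w ≤ expIntegral μ lam w' := by
  refine lintegral_mono fun x => ENNReal.ofReal_le_ofReal (Real.exp_le_exp.2 ?_)
  exact mul_le_mul_of_nonpos_left (h x) (neg_nonpos.2 hlam)

theorem expIntegral_le_lintegral_mul_exp (hlam : 0 < lam) (τ : ℝ) {t : ℝ} (ht : 0 < t) :
    expIntegral μ lam (u t) ≤
      (∫⁻ x, expNegE lam (legendreT u τ x) ∂μ) * ENNReal.ofReal (Real.exp (-lam * τ * t)) := by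
  rw [expIntegral, ← lintegral_mul_const' _ _ ENNReal.ofReal_ne_top]
  refine lintegral_mono fun x => ?_
  calc ENNReal.ofReal (Real.exp (-lam * u t x))
      = ENNReal.ofReal (Real.exp (-lam * (u t x - τ * t))) *
          ENNReal.ofReal (Real.exp (-lam * τ * t)) := by
        rw [← ENNReal.ofReal_mul (Real.exp_nonneg _), ← Real.exp_add]
        ring_nf
    _ ≤ expNegE lam (legendreT u τ x) * ENNReal.ofReal (Real.exp (-lam * τ * t)) := by
        gcongr
        rw [expNegE_legendreT hlam]
        exact le_iSup₂ (f := fun t (_ : 0 < t) =>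
          ENNReal.ofReal (Real.exp (-lam * (u t x - τ * t)))) t ht

theorem lintegral_expNegE_legendreT_le_tsum (hlam : 0 < lam) (hτ : τ ≤ 0)
    (hu : ∀ t, 0 < t → AEMeasurable (u t) μ)
    (hmono : ∀ x, AntitoneOn (fun t => u t x) (Ioi 0)) :
    ∫⁻ x, expNegE lam (legendreT u τ x) ∂μ ≤
      ∑' n : ℕ, expIntegral μ lam (u (n + 1)) * ENNReal.ofReal (Real.exp (lam * τ * n)) := by
  have hmeas (n : ℕ) :
      AEMeasurable (fun x => ENNReal.ofReal (Real.exp (-lam * u (n + 1) x))) μ := by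
    have := hu (n + 1) (by positivity)
    fun_prop
  calc ∫⁻ x, expNegE lam (legendreT u τ x) ∂μ
      ≤ ∫⁻ x, ∑' n : ℕ, ENNReal.ofReal (Real.exp (-lam * u (n + 1) x)) *
          ENNReal.ofReal (Real.exp (lam * τ * n)) ∂μ :=
        lintegral_mono fun x => expNegE_legendreT_le_tsum hlam hτ (hmono x)
    _ = ∑' n : ℕ, expIntegral μ lam (u (n + 1)) * ENNReal.ofReal (Real.exp (lam * τ * n)) := by
        rw [lintegral_tsum fun n => (hmeas n).mul_const _]
        exact tsum_congr fun n => lintegral_mul_const'' _ (hmeas n)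

theorem integrableSlopes_subset_Iic (hμ : μ ≠ 0)
    (hmono : ∀ x, AntitoneOn (fun t => u t x) (Ioi 0)) :
    integrableSlopes μ lam u ⊆ Iic 0 := by
  intro τ (hτ : ∫⁻ x, expNegE lam (legendreT u τ x) ∂μ < ⊤)
  refine mem_Iic.2 (not_lt.1 fun hpos => hτ.ne ?_)
  have hbot (x : X) : legendreT u τ x = ⊥ :=
    legendreT_eq_bot_of_pos hpos ((eventually_ge_atTop 1).mono fun t ht =>
      hmono x (mem_Ioi.2 one_pos) (mem_Ioi.2 (one_pos.trans_le ht)) ht)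
  simp [hbot, expNegE, hμ]

theorem expIntegral_toReal_pos (hμ : μ ≠ 0) {w : X → ℝ} (hw : AEMeasurable w μ)
    (hfin : expIntegral μ lam w < ⊤) : 0 < (expIntegral μ lam w).toReal :=
  ENNReal.toReal_pos (expIntegral_pos hμ hw lam).ne' hfin.ne

theorem lowerDecayRate_expIntegral_nonpos (hμ : μ ≠ 0) (hlam : 0 < lam)
    (hu : ∀ t, 0 < t → AEMeasurable (u t) μ)
    (hmono : ∀ x, AntitoneOn (fun t => u t x) (Ioi 0))
    (hfin : ∀ t, 0 < t → expIntegral μ lam (u t) < ⊤) :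
    lowerDecayRate lam (fun t => (expIntegral μ lam (u t)).toReal) ≤ 0 := by
  have hpos := expIntegral_toReal_pos hμ (hu 1 one_pos) (hfin 1 one_pos)
  have hconst := lowerDecayRate_mul_exp hlam hpos 0
  simp only [mul_zero, zero_mul, Real.exp_zero, mul_one, EReal.coe_zero] at hconst
  rw [← hconst]
  refine lowerDecayRate_anti hlam (.of_forall fun _ => hpos) ?_
  filter_upwards [eventually_ge_atTop 1] with t ht
  have ht0 := one_pos.trans_le ht
  exact ENNReal.toReal_mono (hfin t ht0).ne (expIntegral_anti hlam.le
    fun x => hmono x (mem_Ioi.2 one_pos) (mem_Ioi.2 ht0) ht)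

theorem le_lowerDecayRate_of_mem_integrableSlopes (hμ : μ ≠ 0) (hlam : 0 < lam)
    (hu : ∀ t, 0 < t → AEMeasurable (u t) μ)
    (hfin : ∀ t, 0 < t → expIntegral μ lam (u t) < ⊤) (hτ : τ ∈ integrableSlopes μ lam u) :
    τ ≤ lowerDecayRate lam (fun t => (expIntegral μ lam (u t)).toReal) := by
  set C := ∫⁻ x, expNegE lam (legendreT u τ x) ∂μ
  have hpos (t : ℝ) (ht : 0 < t) : 0 < (expIntegral μ lam (u t)).toReal :=
    expIntegral_toReal_pos hμ (hu t ht) (hfin t ht)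
  have hle (t : ℝ) (ht : 0 < t) :
      (expIntegral μ lam (u t)).toReal ≤ C.toReal * Real.exp (-lam * τ * t) := by
    have := ENNReal.toReal_mono (ENNReal.mul_ne_top hτ.ne ENNReal.ofReal_ne_top)
      (expIntegral_le_lintegral_mul_exp (μ := μ) (u := u) hlam τ ht)
    rwa [ENNReal.toReal_mul, ENNReal.toReal_ofReal (Real.exp_nonneg _)] at this
  have hC : 0 < C.toReal :=
    pos_of_mul_pos_left ((hpos 1 one_pos).trans_le (hle 1 one_pos)) (Real.exp_nonneg _)
  rw [← lowerDecayRate_mul_exp hlam hC τ]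
  exact lowerDecayRate_anti hlam ((eventually_gt_atTop 0).mono hpos)
    ((eventually_gt_atTop 0).mono hle)

theorem mem_integrableSlopes_of_lt_lowerDecayRate (hlam : 0 < lam) (hτ0 : τ ≤ 0)
    (hu : ∀ t, 0 < t → AEMeasurable (u t) μ)
    (hmono : ∀ x, AntitoneOn (fun t => u t x) (Ioi 0))
    (hfin : ∀ t, 0 < t → expIntegral μ lam (u t) < ⊤)
    (hτ : τ < lowerDecayRate lam (fun t => (expIntegral μ lam (u t)).toReal)) :
    τ ∈ integrableSlopes μ lam u := by
  obtain ⟨b, hτb, hb⟩ := EReal.lt_iff_exists_real_btwn.1 hτ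
  have hsum := summable_mul_exp_of_eventually_le_exp hlam (EReal.coe_lt_coe_iff.1 hτb)
    (.of_forall fun _ => ENNReal.toReal_nonneg) (eventually_le_exp_of_lt_lowerDecayRate hlam hb)
  refine (lintegral_expNegE_legendreT_le_tsum hlam hτ0 hu hmono).trans_lt ?_
  convert hsum.tsum_ofReal_ne_top.lt_top using 4 with n
  rw [ENNReal.ofReal_mul ENNReal.toReal_nonneg, ENNReal.ofReal_toReal (hfin _ (by positivity)).ne]

end IntegrableSlopes

theorem stmt3_general {X : Type*} [MeasurableSpace X] {μ : Measure X} (hμ : μ ≠ 0)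
    {lam : ℝ} (hlam : 0 < lam) {u : ℝ → X → ℝ} (hu : ∀ t, 0 < t → AEMeasurable (u t) μ)
    (hmono : ∀ x, AntitoneOn (fun t => u t x) (Ioi 0))
    (hfin : ∀ t, 0 < t → expIntegral μ lam (u t) < ⊤) :
    integrableSlopes μ lam u ⊆ Iic 0 ∧
      lowerDecayRate lam (fun t => (expIntegral μ lam (u t)).toReal) =
        sSup ((↑) '' integrableSlopes μ lam u : Set EReal) := by
  refine ⟨integrableSlopes_subset_Iic hμ hmono, le_antisymm ?_ (sSup_le ?_)⟩
  · refine le_of_forall_lt_imp_le_of_dense fun c hc => ?_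
    obtain ⟨τ, hcτ, hτ⟩ := EReal.lt_iff_exists_real_btwn.1 hc
    have hτ0 : τ ≤ 0 := EReal.coe_nonpos.1
      (hτ.le.trans (lowerDecayRate_expIntegral_nonpos hμ hlam hu hmono hfin))
    exact hcτ.le.trans (le_sSup (mem_image_of_mem _
      (mem_integrableSlopes_of_lt_lowerDecayRate hlam hτ0 hu hmono hfin hτ)))
  · rintro _ ⟨τ, hτ, rfl⟩
    exact le_lowerDecayRate_of_mem_integrableSlopes hμ hlam hu hfin hτ

/-- Let `μ` be a nonzero finite measure, `λ > 0`, and `u : (0,∞) × X → ℝ` measurable with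
`t ↦ u(t,x)` nonincreasing and `≤ 0` for every `x`, and `∫_X exp(−λ·u(t,·)) dμ < ∞` for all
`t > 0`.  If `T := {τ : ∫_X exp(−λ·û_τ) dμ < ∞}` is nonempty, then `T ⊆ (−∞,0]` and
`liminf_{t→∞} −(1/(λt))·log ∫_X exp(−λ·u(t,·)) dμ = sup T`. -/
theorem stmt3 {X : Type*} [MeasurableSpace X] (μ : Measure X) (hμ : μ ≠ 0)
    [IsFiniteMeasure μ] (lam : ℝ) (hlam : 0 < lam)
    (u : ℝ → X → ℝ) (hu : Measurable fun q : ℝ × X => u q.1 q.2)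
    (hmono : ∀ x, AntitoneOn (fun t => u t x) (Set.Ioi (0 : ℝ)))
    (hneg : ∀ x, ∀ t : ℝ, 0 < t → u t x ≤ 0)
    (hfin : ∀ t : ℝ, 0 < t →
      (∫⁻ x, ENNReal.ofReal (Real.exp (-lam * u t x)) ∂μ) < ⊤)
    (hT : {τ : ℝ | (∫⁻ x, expNegE lam (legendreT u τ x) ∂μ) < ⊤}.Nonempty) :
    {τ : ℝ | (∫⁻ x, expNegE lam (legendreT u τ x) ∂μ) < ⊤} ⊆ Set.Iic (0 : ℝ) ∧
    liminf (fun t : ℝ =>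
        ((-(1 / (lam * t)) *
          Real.log ((∫⁻ x, ENNReal.ofReal (Real.exp (-lam * u t x)) ∂μ).toReal) : ℝ) : EReal))
      atTop =
      ((sSup {τ : ℝ | (∫⁻ x, expNegE lam (legendreT u τ x) ∂μ) < ⊤} : ℝ) : EReal) := by
  obtain ⟨hT0, hrate⟩ := stmt3_general hμ hlam (fun t _ => hu.of_uncurry_left.aemeasurable)
    hmono hfin
  exact ⟨hT0, hrate.trans (EReal.coe_strictMono.monotone.map_csSup_of_continuousAt
    continuous_coe_real_ereal.continuousAt hT ⟨0, hT0⟩).symm⟩
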